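/- arXiv:1211.4571 — 6 statements merged into one kernel-verified Lean document; each statement's English description precedes it below -/
import Mathlib

section
/- Let α be a real number with 1 < α < 2, and let x₀ be a positive real number satisfying x₀^(α−1) − (π/(e²√3))·x₀ + 1 = 0. Then for every positive integer n with n > x₀, there exist at least ⌊n^α⌋ primes q satisfying p_{n+1} < q < p₁·p₂⋯p_{n+1}, where p_k denotes the k-th prime (p₁ = 2). -/
/-!
As `α < 2`, it suffices to find `n ^ 2` primes strictly between `pₙ₊₁` and `p₁ ⋯ pₙ₊₁`.

Every prime power dividing `lcm(1, …, m)` is at most `m`, so `lcm(1, …, m) ≤ m ^ π(m)`, while this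
least common multiple is at least `2 ^ m / (m + 1)`. Taking `m = 2 ^ k` yields Chebyshev's bound
`2 ^ k ≤ k * π(2 ^ k) + k + 1`. For `n ≥ 3` the primorial exceeds `2 ^ (n + 4)`, and `k = n + 4`
gives at least `n ^ 2 + n + 1` primes below it, of which only `n + 1` are at most `pₙ₊₁`. For
`n ≤ 2` the primes can be listed.
-/

open Real Finset

lemma lcmUpto_le_pow_primeCounting (m : ℕ) : Nat.lcmUpto m ≤ m ^ Nat.primeCounting m := by
  rcases eq_or_ne m 0 with rfl | hm
  · decide
  · rw [Nat.lcmUpto_eq_prod_pow_log, ← Nat.primesLE_card_eq_primeCounting]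
    exact prod_le_pow_card _ _ _ fun p _ ↦ Nat.pow_log_le_self p hm

lemma two_pow_le_mul_primeCounting_two_pow (k : ℕ) :
    2 ^ k ≤ k * Nat.primeCounting (2 ^ k) + (k + 1) := by
  have h : 2 ^ 2 ^ k ≤ 2 ^ (k * Nat.primeCounting (2 ^ k) + (k + 1)) :=
    calc 2 ^ 2 ^ k ≤ (2 ^ k + 1) * Nat.lcmUpto (2 ^ k) := Chebyshev.two_pow_le_mul_lcmUpto _
      _ ≤ 2 ^ (k + 1) * (2 ^ k) ^ Nat.primeCounting (2 ^ k) := by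
        gcongr
        · have := Nat.one_le_two_pow (n := k)
          omega
        · exact lcmUpto_le_pow_primeCounting _
      _ = 2 ^ (k * Nat.primeCounting (2 ^ k) + (k + 1)) := by rw [← pow_mul, ← pow_add, add_comm]
  exact (Nat.pow_le_pow_iff_right one_lt_two).mp h

lemma mul_sq_add_le_two_pow {n : ℕ} (hn : 3 ≤ n) :
    (n + 4) * (n ^ 2 + n + 1) + (n + 5) ≤ 2 ^ (n + 4) := by
  induction n, hn using Nat.le_induction with
  | base => norm_num
  | succ m hm ih =>
    rw [Nat.add_right_comm m 1 4, pow_succ 2]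
    nlinarith [Nat.mul_le_mul hm hm]

lemma sq_add_lt_primeCounting_two_pow {n : ℕ} (hn : 3 ≤ n) :
    n ^ 2 + n < Nat.primeCounting (2 ^ (n + 4)) := by
  have h : (n + 4) * (n ^ 2 + n + 1) ≤ (n + 4) * Nat.primeCounting (2 ^ (n + 4)) := by
    have := mul_sq_add_le_two_pow hn
    have := two_pow_le_mul_primeCounting_two_pow (n + 4)
    omega
  exact Nat.le_of_mul_le_mul_left h (by omega)

lemma two_pow_lt_prod_nth_prime {n : ℕ} (hn : 3 ≤ n) :
    2 ^ (n + 4) < ∏ i ∈ range (n + 1), Nat.nth Nat.Prime i := by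
  induction n, hn using Nat.le_induction with
  | base =>
    norm_num [prod_range_succ, Nat.nth_prime_zero_eq_two, Nat.nth_prime_one_eq_three,
      Nat.nth_prime_two_eq_five, Nat.nth_prime_three_eq_seven]
  | succ m _ ih =>
    rw [Nat.add_right_comm m 1 4, pow_succ, prod_range_succ]
    have hp := Nat.prime_nth_prime (m + 1)
    exact Nat.mul_lt_mul_of_lt_of_le ih hp.two_le hp.pos

lemma count_le_count_succ_add_card_filter_Ioo (p : ℕ → Prop) [DecidablePred p] (a b : ℕ) :
    Nat.count p b ≤ Nat.count p (a + 1) + #{x ∈ Ioo a b | p x} := by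
  have hcover : range b ⊆ range (a + 1) ∪ Ioo a b := fun x hx ↦ by
    simp only [mem_union, mem_range, mem_Ioo] at hx ⊢
    omega
  rw [Nat.count_eq_card_filter_range, Nat.count_eq_card_filter_range]
  calc #{x ∈ range b | p x} ≤ #{x ∈ range (a + 1) ∪ Ioo a b | p x} :=
        card_le_card (filter_subset_filter p hcover)
    _ ≤ #{x ∈ range (a + 1) | p x} + #{x ∈ Ioo a b | p x} := by
        rw [filter_union]
        exact card_union_le _ _

lemma primeCounting_le_succ_add_card_primes_Ioo {N P : ℕ} (h : N < P) (n : ℕ) :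
    Nat.primeCounting N ≤ n + 1 + #{q ∈ Ioo (Nat.nth Nat.Prime n) P | q.Prime} :=
  calc Nat.primeCounting N ≤ Nat.count Nat.Prime P := Nat.monotone_primeCounting' h
    _ ≤ Nat.count Nat.Prime (Nat.nth Nat.Prime n + 1) +
          #{q ∈ Ioo (Nat.nth Nat.Prime n) P | q.Prime} :=
        count_le_count_succ_add_card_filter_Ioo _ _ _
    _ = n + 1 + #{q ∈ Ioo (Nat.nth Nat.Prime n) P | q.Prime} := by
        rw [Nat.count_nth_succ_of_infinite Nat.infinite_setOfPred_prime]

lemma sq_le_card_primes_Ioo_nth_prime_prod (n : ℕ) :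
    n ^ 2 ≤ #{q ∈ Ioo (Nat.nth Nat.Prime n) (∏ i ∈ range (n + 1), Nat.nth Nat.Prime i) |
      q.Prime} := by
  rcases lt_or_ge n 3 with hn | hn
  · interval_cases n <;>
      simp only [prod_range_succ, prod_range_zero, Nat.nth_prime_zero_eq_two,
        Nat.nth_prime_one_eq_three, Nat.nth_prime_two_eq_five] <;> decide
  · have hcount := sq_add_lt_primeCounting_two_pow hn
    have hlocate := primeCounting_le_succ_add_card_primes_Ioo (two_pow_lt_prod_nth_prime hn) n
    omega

lemma floor_rpow_le_pow {α : ℝ} {k n : ℕ} (hα : α ≤ k) (hn : 0 < n) :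
    ⌊(n : ℝ) ^ α⌋₊ ≤ n ^ k := by
  refine Nat.floor_le_of_le ?_
  calc (n : ℝ) ^ α ≤ (n : ℝ) ^ (k : ℝ) :=
        rpow_le_rpow_of_exponent_le (Nat.one_le_cast.mpr hn) hα
    _ = ((n ^ k : ℕ) : ℝ) := by rw [rpow_natCast, Nat.cast_pow]

theorem stmt_0_general {α : ℝ} (hα : α ≤ 2) {n : ℕ} (hn : 0 < n) :
    ⌊(n : ℝ) ^ α⌋₊ ≤
      #{q ∈ Ioo (Nat.nth Nat.Prime n) (∏ i ∈ range (n + 1), Nat.nth Nat.Prime i) | q.Prime} :=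
  (floor_rpow_le_pow (by exact_mod_cast hα) hn).trans (sq_le_card_primes_Ioo_nth_prime_prod n)

/-- Let `α` be a real number with `1 < α < 2`, and let `x₀` be a positive real number
satisfying `x₀^(α−1) − (π/(e²√3))·x₀ + 1 = 0`. Then for every positive integer `n` with
`n > x₀`, there exist at least `⌊n^α⌋` primes `q` with `p_{n+1} < q < p₁·p₂⋯p_{n+1}`,
where `p_k` is the `k`-th prime (so `p_{k+1} = Nat.nth Nat.Prime k`). -/
theorem stmt_0 (α : ℝ) (hα1 : 1 < α) (hα2 : α < 2)
    (x₀ : ℝ) (hx₀ : 0 < x₀)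
    (hroot : x₀ ^ (α - 1) - (π / (Real.exp 2 * Real.sqrt 3)) * x₀ + 1 = 0)
    (n : ℕ) (hn : 0 < n) (hnx : x₀ < (n : ℝ)) :
    ⌊(n : ℝ) ^ α⌋₊ ≤
      ((Finset.Ioo (Nat.nth Nat.Prime n)
          (∏ i ∈ Finset.range (n + 1), Nat.nth Nat.Prime i)).filter Nat.Prime).card :=
  stmt_0_general hα2.le hn
end

section
/- For each positive integer n there are at least n primes q satisfying p_{n+1} < q < p₁·p₂⋯p_{n+1}, where p_k denotes the k-th prime (p₁ = 2). -/
/-!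
Bertrand's postulate gives `p_{k+1} < 2 p_k` (strictly, as `2 p_k` is composite), hence
`p_{2n+1} < 2 ^ n * p_{n+1} ≤ p₁ ⋯ p_n * p_{n+1}`, so the `n` primes `p_{n+2}, …, p_{2n+1}` lie
strictly between `p_{n+1}` and `p₁ ⋯ p_{n+1}`.
-/

open Finset

theorem le_card_filter_Ioo_nth {p : ℕ → Prop} [DecidablePred p] (hp : (Set.ofPred p).Infinite)
    {m k b : ℕ} (hb : Nat.nth p (m + k) < b) : k ≤ #{q ∈ Ioo (Nat.nth p m) b | p q} := by
  have maps_to : ∀ i ∈ Ioc m (m + k), Nat.nth p i ∈ {q ∈ Ioo (Nat.nth p m) b | p q} := by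
    intro i hi
    obtain ⟨hmi, him⟩ := mem_Ioc.mp hi
    exact mem_filter.mpr ⟨mem_Ioo.mpr ⟨Nat.nth_strictMono hp hmi,
      (Nat.nth_monotone hp him).trans_lt hb⟩, Nat.nth_mem_of_infinite hp i⟩
  calc k = #(Ioc m (m + k)) := by rw [Nat.card_Ioc, Nat.add_sub_cancel_left]
    _ ≤ _ := card_le_card_of_injOn (Nat.nth p) maps_to (Nat.nth_injective hp).injOn

theorem nth_prime_succ_lt_two_mul (k : ℕ) :
    Nat.nth Nat.Prime (k + 1) < 2 * Nat.nth Nat.Prime k := by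
  have hk := Nat.prime_nth_prime k
  obtain ⟨q, hq, hlt, hle⟩ := Nat.exists_prime_lt_and_le_two_mul _ hk.ne_zero
  have q_ne : q ≠ 2 * Nat.nth Nat.Prime k := by
    rintro rfl
    exact Nat.not_prime_mul (by norm_num) hk.ne_one hq
  have succ_le : Nat.nth Nat.Prime (k + 1) ≤ q :=
    not_lt.mp fun h => (Nat.le_nth_of_lt_nth_succ h hq).not_gt hlt
  exact succ_le.trans_lt (hle.lt_of_ne q_ne)

theorem nth_prime_add_lt_two_pow_mul (m : ℕ) {k : ℕ} (hk : 0 < k) :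
    Nat.nth Nat.Prime (m + k) < 2 ^ k * Nat.nth Nat.Prime m := by
  have h := lt_geom (u := fun i => (Nat.nth Nat.Prime (m + i) : ℝ)) zero_le_two hk
    fun i _ => mod_cast nth_prime_succ_lt_two_mul (m + i)
  exact_mod_cast h

theorem two_pow_card_le_prod_nth_prime (s : Finset ℕ) :
    2 ^ #s ≤ ∏ i ∈ s, Nat.nth Nat.Prime i :=
  pow_card_le_prod s _ 2 fun i _ => (Nat.prime_nth_prime i).two_le

/-- For each positive integer `n` there are at least `n` primes `q` with
`p_{n+1} < q < p₁·p₂⋯p_{n+1}`, where `p_k` is the `k`-th prime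
(so `p_{k+1} = Nat.nth Nat.Prime k`). -/
theorem stmt_1 (n : ℕ) (hn : 0 < n) :
    n ≤ ((Finset.Ioo (Nat.nth Nat.Prime n)
          (∏ i ∈ Finset.range (n + 1), Nat.nth Nat.Prime i)).filter Nat.Prime).card := by
  apply le_card_filter_Ioo_nth Nat.infinite_setOfPred_prime
  have two_pow_le : 2 ^ n ≤ ∏ i ∈ range n, Nat.nth Nat.Prime i := by
    simpa only [card_range] using two_pow_card_le_prod_nth_prime (range n)
  calc Nat.nth Nat.Prime (n + n)
      < 2 ^ n * Nat.nth Nat.Prime n := nth_prime_add_lt_two_pow_mul n hn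
    _ ≤ (∏ i ∈ range n, Nat.nth Nat.Prime i) * Nat.nth Nat.Prime n :=
        Nat.mul_le_mul_right _ two_pow_le
    _ = ∏ i ∈ range (n + 1), Nat.nth Nat.Prime i := (prod_range_succ _ n).symm
end

section
/- Let α be a real number with α > 1. Then for every positive integer n, (1/n!)·C(⌊n^α⌋ + n, n) < e^{2n}·(n^{α−1} + 1)^n·√3 / (2·π·n^{n+1}). -/
open Real

/-!
By `C(m, k) ≤ m ^ k / k!` and `⌊y⌋ ≤ y`, the quantity `C(⌊y⌋, n) / n!` is at most `y ^ n / n! ^ 2`,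
and squaring Stirling's lower bound `√(2πn) (n / e) ^ n ≤ n!` controls the denominator. Taking
`y = n ^ α + n = n (n ^ (α - 1) + 1)` gives the claim even without the factor `√3 > 1`, which is
what makes the inequality strict.
-/

theorem choose_floor_le_pow_div {K : Type*} [Semifield K] [LinearOrder K] [IsStrictOrderedRing K]
    [FloorSemiring K] {y : K} (hy : 0 ≤ y) (k : ℕ) :
    (⌊y⌋₊.choose k : K) ≤ y ^ k / k.factorial :=
  (Nat.choose_le_pow_div k ⌊y⌋₊).trans <| by
    gcongr
    exact Nat.floor_le hy

theorem two_pi_mul_mul_pow_le_factorial_sq (n : ℕ) :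
    2 * π * n * (n / exp 1) ^ (2 * n) ≤ (n.factorial : ℝ) ^ 2 :=
  calc 2 * π * n * (n / exp 1) ^ (2 * n)
      = (√(2 * π * n) * (n / exp 1) ^ n) ^ 2 := by
        rw [mul_pow, sq_sqrt (by positivity), pow_mul']
    _ ≤ (n.factorial : ℝ) ^ 2 := by
        gcongr
        exact Stirling.le_factorial_stirling n

theorem choose_floor_div_factorial_le {n : ℕ} (hn : n ≠ 0) {y : ℝ} (hy : 0 ≤ y) :
    (⌊y⌋₊.choose n : ℝ) / n.factorial ≤
      exp (2 * n) * (y / n) ^ n / (2 * π * (n : ℝ) ^ (n + 1)) :=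
  calc (⌊y⌋₊.choose n : ℝ) / n.factorial
      ≤ y ^ n / n.factorial / n.factorial := by
        gcongr
        exact choose_floor_le_pow_div hy n
    _ = y ^ n / (n.factorial : ℝ) ^ 2 := by rw [div_div, sq]
    _ ≤ y ^ n / (2 * π * n * (n / exp 1) ^ (2 * n)) := by
        gcongr
        exact two_pi_mul_mul_pow_le_factorial_sq n
    _ = exp (2 * n) * (y / n) ^ n / (2 * π * (n : ℝ) ^ (n + 1)) := by
        have exp_two_mul : exp (2 * n) = exp 1 ^ (2 * n) := by
          rw [exp_one_pow, Nat.cast_mul, Nat.cast_ofNat]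
        rw [exp_two_mul, div_pow, div_pow]
        field_simp
        ring

theorem stmt_4_general (α : ℝ) {n : ℕ} (hn : 0 < n) :
    (1 / (n.factorial : ℝ)) * ((⌊(n : ℝ) ^ α⌋₊ + n).choose n : ℝ) <
      exp (2 * n) * ((n : ℝ) ^ (α - 1) + 1) ^ n * √3 / (2 * π * (n : ℝ) ^ (n + 1)) := by
  have hn' : (n : ℝ) ≠ 0 := Nat.cast_ne_zero.mpr hn.ne'
  have one_lt_sqrt_three : 1 < √3 := by norm_num [lt_sqrt]
  calc (1 / (n.factorial : ℝ)) * ((⌊(n : ℝ) ^ α⌋₊ + n).choose n : ℝ)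
      = (⌊(n : ℝ) ^ α + n⌋₊.choose n : ℝ) / n.factorial := by
        rw [Nat.floor_add_natCast (by positivity), one_div_mul_eq_div]
    _ ≤ exp (2 * n) * (((n : ℝ) ^ α + n) / n) ^ n / (2 * π * (n : ℝ) ^ (n + 1)) :=
        choose_floor_div_factorial_le hn.ne' (by positivity)
    _ = exp (2 * n) * ((n : ℝ) ^ (α - 1) + 1) ^ n / (2 * π * (n : ℝ) ^ (n + 1)) := by
        rw [add_div, div_self hn', rpow_sub_one hn']
    _ < exp (2 * n) * ((n : ℝ) ^ (α - 1) + 1) ^ n * √3 / (2 * π * (n : ℝ) ^ (n + 1)) :=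
        div_lt_div_of_pos_right (lt_mul_of_one_lt_right (by positivity) one_lt_sqrt_three)
          (by positivity)

/-- Let `α > 1` be real. Then for every positive integer `n`,
`(1/n!)·C(⌊n^α⌋ + n, n) < e^{2n}·(n^{α−1} + 1)^n·√3 / (2·π·n^{n+1})`. -/
theorem stmt_4 (α : ℝ) (hα : 1 < α) (n : ℕ) (hn : 0 < n) :
    (1 / (n.factorial : ℝ)) * ((⌊(n : ℝ) ^ α⌋₊ + n).choose n : ℝ) <
      Real.exp (2 * n) * ((n : ℝ) ^ (α - 1) + 1) ^ n * Real.sqrt 3 /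
        (2 * π * (n : ℝ) ^ (n + 1)) :=
  stmt_4_general α hn
end

section
/- For every integer n ≥ 3, the product (p₁ − 1)(p₂ − 1)⋯(p_{n+1} − 1) is at least 2^{n−2}·(n+1)!, where p_k denotes the k-th prime (p₁ = 2). -/
open Finset

/-!
Consecutive odd primes differ by at least `2`, so counting up from the fifth prime `11` gives
`p_{n+1} - 1 ≥ 2 (n + 1)` for `n ≥ 4`, and `2 (n + 1)` is the ratio of consecutive lower bounds.
At `n = 3` the two sides agree: `2 * 4! = 48 = 1 * 2 * 4 * 6`.
-/

theorem add_two_le_of_prime_of_lt {p q : ℕ} (hp : p.Prime) (hq : q.Prime) (hp2 : p ≠ 2)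
    (hpq : p < q) : p + 2 ≤ q := by
  have hp_odd : Odd p := hp.odd_of_ne_two hp2
  have hq_odd : Odd q := hq.odd_of_ne_two (hp.two_le.trans_lt hpq).ne'
  grind

theorem nth_prime_add_two_mul_le_nth_prime_add {k : ℕ} (hk : k ≠ 0) (m : ℕ) :
    Nat.nth Nat.Prime k + 2 * m ≤ Nat.nth Nat.Prime (k + m) := by
  have hmono : StrictMono (Nat.nth Nat.Prime) := Nat.nth_strictMono Nat.infinite_setOfPred_prime
  induction m with
  | zero => rfl
  | succ m ih =>
    have hne_two : Nat.nth Nat.Prime (k + m) ≠ 2 := by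
      rw [← Nat.nth_prime_zero_eq_two]
      exact hmono.injective.ne (by omega)
    have hgap : Nat.nth Nat.Prime (k + m) + 2 ≤ Nat.nth Nat.Prime (k + (m + 1)) :=
      add_two_le_of_prime_of_lt (Nat.prime_nth_prime _) (Nat.prime_nth_prime _) hne_two
        (hmono (Nat.lt_succ_self _))
    omega

theorem two_mul_succ_le_nth_prime_sub_one {k : ℕ} (hk : 4 ≤ k) :
    2 * (k + 1) ≤ Nat.nth Nat.Prime k - 1 := by
  obtain ⟨m, rfl⟩ := Nat.exists_eq_add_of_le hk
  have hgrowth := nth_prime_add_two_mul_le_nth_prime_add four_ne_zero m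
  rw [Nat.nth_prime_four_eq_eleven] at hgrowth
  omega

/-- For every integer `n ≥ 3`, `(p₁ − 1)(p₂ − 1)⋯(p_{n+1} − 1) ≥ 2^{n−2}·(n+1)!`, where
`p_k` is the `k`-th prime (so `p_{k+1} = Nat.nth Nat.Prime k`). -/
theorem stmt_9 (n : ℕ) (hn : 3 ≤ n) :
    2 ^ (n - 2) * (n + 1).factorial ≤
      ∏ i ∈ Finset.range (n + 1), (Nat.nth Nat.Prime i - 1) := by
  induction n, hn using Nat.le_induction with
  | base =>
    simp [prod_range_succ, Nat.nth_prime_zero_eq_two, Nat.nth_prime_one_eq_three,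
      Nat.nth_prime_two_eq_five, Nat.nth_prime_three_eq_seven, Nat.factorial]
  | succ n hn ih =>
    calc 2 ^ (n + 1 - 2) * (n + 1 + 1).factorial
        = (2 ^ (n - 2) * (n + 1).factorial) * (2 * (n + 1 + 1)) := by
          rw [Nat.sub_add_comm (by omega : 2 ≤ n), pow_succ, Nat.factorial_succ (n + 1)]
          ring
      _ ≤ (∏ i ∈ range (n + 1), (Nat.nth Nat.Prime i - 1)) * (Nat.nth Nat.Prime (n + 1) - 1) :=
          Nat.mul_le_mul ih (two_mul_succ_le_nth_prime_sub_one (by omega))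
      _ = ∏ i ∈ range (n + 1 + 1), (Nat.nth Nat.Prime i - 1) := (prod_range_succ _ _).symm
end

section
/- Let m be a positive integer, let P = p₁·p₂⋯p_{m+1} be the product of the first m+1 primes, and suppose that there are exactly k primes q with p_{m+1} < q < P. Then C(m+k, m) ≥ φ(P) = (p₁ − 1)(p₂ − 1)⋯(p_{m+1} − 1), where p_j denotes the j-th prime (p₁ = 2). -/
open Finset

/-!
A residue `n < P` coprime to `P` is determined by its multiset of prime factors. These are primes
below `P` exceeding `p_{m+1}`, and since `n < P ≤ p_{m+1} ^ (m + 1)` there are at most `m` of them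
with multiplicity. There are `C(m + k, m)` multisets of size at most `m` in a set of `k` elements.
-/

theorem card_le_choose_of_forall_exists_multiset_prod {M : Type*} [CommMonoid M] {A S : Finset M}
    {m : ℕ} (h : ∀ a ∈ A, ∃ s : Multiset M, (∀ x ∈ s, x ∈ S) ∧ s.card ≤ m ∧ s.prod = a) :
    #A ≤ (m + #S).choose m := by
  classical
  -- Padding with `none` turns multisets of size at most `m` into multisets of size exactly `m`.
  let prodSome (t : Sym (Option S) m) : M := (t.val.map fun o ↦ o.elim 1 Subtype.val).prod
  have subset_image : A ⊆ univ.image prodSome := by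
    intro a ha
    obtain ⟨s, hsS, hcard, rfl⟩ := h a ha
    lift s to Multiset S using hsS
    rw [Multiset.card_map] at hcard
    refine mem_image.2
      ⟨⟨s.map some + Multiset.replicate (m - s.card) none, ?_⟩, mem_univ _, ?_⟩
    · simp [hcard]
    · simp [prodSome, Function.comp_def]
  calc #A ≤ Fintype.card (Sym (Option S) m) := (card_le_card subset_image).trans card_image_le
    _ = (m + #S).choose m := by
      rw [Sym.card_sym_eq_multichoose, Fintype.card_option, Fintype.card_coe, Nat.multichoose_eq,
        Nat.succ_add_sub_one, add_comm]

theorem card_le_choose_of_primeFactors_subset_of_cardFactors_le {A S : Finset ℕ} {m : ℕ}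
    (h : ∀ n ∈ A, n ≠ 0 ∧ n.primeFactors ⊆ S ∧ ArithmeticFunction.cardFactors n ≤ m) :
    #A ≤ (m + #S).choose m := by
  refine card_le_choose_of_forall_exists_multiset_prod fun n hn ↦ ?_
  obtain ⟨ne_zero, subset, cardFactors_le⟩ := h n hn
  exact ⟨n.primeFactorsList, fun _ hq ↦ subset (List.mem_toFinset.2 hq), cardFactors_le,
    (Multiset.prod_coe _).trans (Nat.prod_primeFactorsList ne_zero)⟩

theorem pow_cardFactors_le {n p : ℕ} (hn : n ≠ 0) (h : ∀ q ∈ n.primeFactors, p ≤ q) :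
    p ^ ArithmeticFunction.cardFactors n ≤ n :=
  calc p ^ n.primeFactorsList.length ≤ n.primeFactorsList.prod :=
        List.pow_card_le_prod _ _ fun q hq ↦ h q (List.mem_toFinset.2 hq)
    _ = n := Nat.prod_primeFactorsList hn

theorem totient_le_choose_card_primes_not_dvd {N p m : ℕ} (hNp : N ≤ p ^ (m + 1))
    (le_of_not_dvd : ∀ q, q.Prime → ¬q ∣ N → p ≤ q) :
    N.totient ≤ (m + #{q ∈ range N | q.Prime ∧ ¬q ∣ N}).choose m := by
  obtain hN | hN := le_or_gt N 1
  · exact N.totient_le.trans (hN.trans (Nat.choose_pos (Nat.le_add_right m _)))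
  have one_lt_p : 1 < p := (Nat.one_lt_pow_iff m.succ_ne_zero).1 (hN.trans_le hNp)
  rw [Nat.totient_eq_card_coprime]
  refine card_le_choose_of_primeFactors_subset_of_cardFactors_le fun n hn ↦ ?_
  obtain ⟨n_lt, coprime⟩ : n < N ∧ N.Coprime n := by simpa only [mem_filter, mem_range] using hn
  have ne_zero : n ≠ 0 := by
    rintro rfl
    exact hN.ne' ((Nat.coprime_zero_right N).1 coprime)
  have not_dvd {q : ℕ} (hq : q ∈ n.primeFactors) : ¬q ∣ N := fun hqN ↦
    Nat.not_coprime_of_dvd_of_dvd (Nat.prime_of_mem_primeFactors hq).one_lt hqN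
      (Nat.dvd_of_mem_primeFactors hq) coprime
  refine ⟨ne_zero, fun q hq ↦ ?_, ?_⟩
  · exact mem_filter.2 ⟨mem_range.2 ((Nat.le_of_mem_primeFactors hq).trans_lt n_lt),
      Nat.prime_of_mem_primeFactors hq, not_dvd hq⟩
  · have pow_lt : p ^ ArithmeticFunction.cardFactors n < p ^ (m + 1) :=
      calc p ^ ArithmeticFunction.cardFactors n ≤ n := pow_cardFactors_le ne_zero fun q hq ↦
            le_of_not_dvd q (Nat.prime_of_mem_primeFactors hq) (not_dvd hq)
        _ < N := n_lt
        _ ≤ p ^ (m + 1) := hNp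
    exact Nat.lt_succ_iff.1 ((Nat.pow_lt_pow_iff_right one_lt_p).1 pow_lt)

theorem totient_eq_prod_primeFactors_of_squarefree {n : ℕ} (hn : Squarefree n) :
    n.totient = ∏ p ∈ n.primeFactors, (p - 1) := by
  rw [Nat.totient_eq_div_primeFactors_mul, Nat.prod_primeFactors_of_squarefree hn,
    Nat.div_self (Nat.pos_of_ne_zero hn.ne_zero), one_mul]

theorem image_nth_range_succ {p : ℕ → Prop} [DecidablePred p] (hp : (Set.ofPred p).Infinite)
    (n : ℕ) : (range (n + 1)).image (Nat.nth p) = {x ∈ range (Nat.nth p n + 1) | p x} := by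
  ext x
  simp only [mem_image, mem_range, mem_filter, Nat.lt_succ_iff]
  constructor
  · rintro ⟨i, hi, rfl⟩
    exact ⟨Nat.nth_monotone hp hi, Nat.nth_mem_of_infinite hp i⟩
  · rintro ⟨hx, px⟩
    exact ⟨Nat.count p x, Nat.le_nth_of_count_le hx, Nat.nth_count px⟩

theorem prod_range_succ_nth_prime {M : Type*} [CommMonoid M] (f : ℕ → M) (m : ℕ) :
    ∏ i ∈ range (m + 1), f (Nat.nth Nat.Prime i) = ∏ q ∈ (Nat.nth Nat.Prime m).primesLE, f q := by
  rw [Nat.primesLE_eq_filter_range, ← image_nth_range_succ Nat.infinite_setOfPred_prime,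
    prod_image (Nat.nth_injective Nat.infinite_setOfPred_prime).injOn]

theorem primorial_nth_prime (m : ℕ) :
    primorial (Nat.nth Nat.Prime m) = ∏ i ∈ range (m + 1), Nat.nth Nat.Prime i :=
  (prod_range_succ_nth_prime id m).symm

theorem primorial_nth_prime_le_pow (m : ℕ) :
    primorial (Nat.nth Nat.Prime m) ≤ Nat.nth Nat.Prime m ^ (m + 1) := by
  simpa only [primorial_nth_prime, card_range] using
    prod_le_pow_card (range (m + 1)) (Nat.nth Nat.Prime) (Nat.nth Nat.Prime m) fun _ hi ↦
      Nat.nth_monotone Nat.infinite_setOfPred_prime (mem_range_succ_iff.1 hi)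

theorem totient_primorial (n : ℕ) : (primorial n).totient = ∏ p ∈ n.primesLE, (p - 1) := by
  rw [totient_eq_prod_primeFactors_of_squarefree (squarefree_primorial n), primeFactors_primorial]

theorem filter_prime_not_dvd_primorial (n N : ℕ) :
    {q ∈ range N | q.Prime ∧ ¬q ∣ primorial n} = {q ∈ Ioo n N | q.Prime} := by
  ext q
  simp only [mem_filter, mem_range, mem_Ioo]
  constructor
  · rintro ⟨q_lt, hq, not_dvd⟩
    exact ⟨⟨not_le.1 (mt hq.dvd_primorial_iff.2 not_dvd), q_lt⟩, hq⟩
  · rintro ⟨⟨lt_q, q_lt⟩, hq⟩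
    exact ⟨q_lt, hq, mt hq.dvd_primorial_iff.1 lt_q.not_ge⟩

theorem totient_primorial_le_choose {n m : ℕ} (h : primorial n ≤ n ^ (m + 1)) :
    (primorial n).totient ≤ (m + #{q ∈ Ioo n (primorial n) | q.Prime}).choose m := by
  rw [← filter_prime_not_dvd_primorial]
  exact totient_le_choose_card_primes_not_dvd h fun q hq not_dvd ↦
    (not_le.1 (mt hq.dvd_primorial_iff.2 not_dvd)).le

/-- Let `m` be a positive integer, let `P = p₁·p₂⋯p_{m+1}` be the product of the first
`m+1` primes, and suppose there are exactly `k` primes `q` with `p_{m+1} < q < P`. Then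
`C(m+k, m) ≥ φ(P)` and `φ(P) = (p₁ − 1)(p₂ − 1)⋯(p_{m+1} − 1)`.
Here `p_{j+1} = Nat.nth Nat.Prime j`. -/
theorem stmt_12 (m : ℕ) (hm : 0 < m)
    (P : ℕ) (hP : P = ∏ i ∈ Finset.range (m + 1), Nat.nth Nat.Prime i)
    (k : ℕ)
    (hk : k = ((Finset.Ioo (Nat.nth Nat.Prime m) P).filter Nat.Prime).card) :
    Nat.totient P ≤ (m + k).choose m ∧
      Nat.totient P = ∏ i ∈ Finset.range (m + 1), (Nat.nth Nat.Prime i - 1) := by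
  rw [← primorial_nth_prime] at hP
  subst hP hk
  constructor
  · exact totient_primorial_le_choose (primorial_nth_prime_le_pow m)
  · rw [totient_primorial, prod_range_succ_nth_prime (· - 1)]
end

section
/- For every real number α with 1 < α < 2, p_{o(n²)} < p₁·p₂⋯p_{n+1} in the following precise sense: there exists a positive integer N such that for all n > N, p_{n + 1 + ⌊n^α⌋} < p₁·p₂⋯p_{n+1}, where p_k denotes the k-th prime (p₁ = 2). -/
open Finset

/-!
The product of the first `n + 1` primes is at least `2 ^ (n + 1)`, whereas a prime whose index is
polynomial in `n` is at most `2 ^ n` for large `n`. The latter follows from Chebyshev's lower bound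
for `π`: every prime power dividing `lcm (1, …, N)` is at most `N`, so `lcm (1, …, N)`, which is at
least `2 ^ N / (N + 1)`, is at most `N ^ π N`.
-/

open Filter
open scoped Nat.Prime

lemma two_pow_le_succ_pow_primeCounting_succ (N : ℕ) : 2 ^ N ≤ (N + 1) ^ (π N + 1) :=
  calc 2 ^ N ≤ (N + 1) * Nat.lcmUpto N := Chebyshev.two_pow_le_mul_lcmUpto N
    _ = (N + 1) * ∏ p ∈ Nat.primesLE N, p ^ p.log N := by rw [Nat.lcmUpto_eq_prod_pow_log]
    _ ≤ (N + 1) * (N + 1) ^ #(Nat.primesLE N) := by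
        gcongr
        exact prod_le_pow_card _ _ _ fun p _ ↦ Nat.pow_log_le_add_one p N
    _ = (N + 1) ^ (π N + 1) := by rw [Nat.primesLE_card_eq_primeCounting, pow_succ']

lemma nth_prime_le_of_succ_pow_succ_lt_two_pow {k N : ℕ} (h : (N + 1) ^ (k + 1) < 2 ^ N) :
    Nat.nth Nat.Prime k ≤ N := by
  have hpow : (N + 1) ^ (k + 1) < (N + 1) ^ (π N + 1) :=
    h.trans_le (two_pow_le_succ_pow_primeCounting_succ N)
  have hk : k < π N := Nat.succ_lt_succ_iff.mp ((pow_right_mono₀ N.succ_pos).reflect_lt hpow)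
  exact Nat.lt_succ_iff.mp (Nat.nth_lt_of_lt_count hk)

lemma nth_prime_le_two_pow {k n : ℕ} (h : (n + 1) * (k + 1) < 2 ^ n) :
    Nat.nth Nat.Prime k ≤ 2 ^ n := by
  apply nth_prime_le_of_succ_pow_succ_lt_two_pow
  calc (2 ^ n + 1) ^ (k + 1) ≤ (2 ^ (n + 1)) ^ (k + 1) := by
        gcongr
        exact Nat.pow_lt_pow_succ one_lt_two
    _ = 2 ^ ((n + 1) * (k + 1)) := (pow_mul _ _ _).symm
    _ < 2 ^ 2 ^ n := Nat.pow_lt_pow_right one_lt_two h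

lemma two_pow_le_prod_nth_prime (m : ℕ) : 2 ^ m ≤ ∏ i ∈ range m, Nat.nth Nat.Prime i := by
  simpa only [card_range] using
    pow_card_le_prod (range m) _ 2 fun i _ ↦ (Nat.prime_nth_prime i).two_le

lemma nth_prime_lt_prod_nth_prime {k n : ℕ} (h : (n + 1) * (k + 1) < 2 ^ n) :
    Nat.nth Nat.Prime k < ∏ i ∈ range (n + 1), Nat.nth Nat.Prime i :=
  calc Nat.nth Nat.Prime k ≤ 2 ^ n := nth_prime_le_two_pow h
    _ < 2 ^ (n + 1) := Nat.pow_lt_pow_succ one_lt_two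
    _ ≤ ∏ i ∈ range (n + 1), Nat.nth Nat.Prime i := two_pow_le_prod_nth_prime (n + 1)

lemma floor_rpow_le_pow_ceil {n : ℕ} (hn : 1 ≤ n) (α : ℝ) : ⌊(n : ℝ) ^ α⌋₊ ≤ n ^ ⌈α⌉₊ := by
  apply Nat.floor_le_of_le
  calc (n : ℝ) ^ α ≤ (n : ℝ) ^ (⌈α⌉₊ : ℝ) :=
        Real.rpow_le_rpow_of_exponent_le (mod_cast hn) (Nat.le_ceil α)
    _ = ((n ^ ⌈α⌉₊ : ℕ) : ℝ) := by rw [Real.rpow_natCast, Nat.cast_pow]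

lemma eventually_const_mul_pow_lt_two_pow (c d : ℕ) : ∀ᶠ n : ℕ in atTop, c * n ^ d < 2 ^ n := by
  have hlim := (tendsto_pow_const_div_const_pow_of_one_lt d (one_lt_two (α := ℝ))).const_mul (c : ℝ)
  rw [mul_zero] at hlim
  filter_upwards [hlim.eventually_lt_const one_pos] with n hn
  rw [← mul_div_assoc, div_lt_one (by positivity)] at hn
  exact_mod_cast hn

lemma eventually_succ_mul_add_floor_rpow_succ_lt_two_pow (α : ℝ) :
    ∀ᶠ n : ℕ in atTop, (n + 1) * (n + ⌊(n : ℝ) ^ α⌋₊ + 1) < 2 ^ n := by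
  filter_upwards [eventually_const_mul_pow_lt_two_pow 6 (⌈α⌉₊ + 2), eventually_ge_atTop 1]
    with n hpow hn
  have hself : n ≤ n ^ (⌈α⌉₊ + 1) := Nat.le_self_pow (Nat.succ_ne_zero _) n
  have hfloor : ⌊(n : ℝ) ^ α⌋₊ ≤ n ^ (⌈α⌉₊ + 1) :=
    (floor_rpow_le_pow_ceil hn α).trans (Nat.pow_le_pow_right hn (Nat.le_succ _))
  calc (n + 1) * (n + ⌊(n : ℝ) ^ α⌋₊ + 1) ≤ (2 * n) * (3 * n ^ (⌈α⌉₊ + 1)) :=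
        Nat.mul_le_mul (by omega) (by omega)
    _ = 6 * n ^ (⌈α⌉₊ + 2) := by ring
    _ < 2 ^ n := hpow

theorem stmt_19_general (α : ℝ) :
    ∀ᶠ n : ℕ in atTop, Nat.nth Nat.Prime (n + ⌊(n : ℝ) ^ α⌋₊) <
      ∏ i ∈ range (n + 1), Nat.nth Nat.Prime i :=
  (eventually_succ_mul_add_floor_rpow_succ_lt_two_pow α).mono fun _ ↦ nth_prime_lt_prod_nth_prime

/-- For every real `α` with `1 < α < 2`, `p_{o(n²)} < p₁·p₂⋯p_{n+1}` in the following
precise sense: there is a positive integer `N` such that for all `n > N`,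
`p_{n + 1 + ⌊n^α⌋} < p₁·p₂⋯p_{n+1}`, where `p_k` is the `k`-th prime
(so `p_{k+1} = Nat.nth Nat.Prime k`). -/
theorem stmt_19 (α : ℝ) (hα1 : 1 < α) (hα2 : α < 2) :
    ∃ N : ℕ, 0 < N ∧ ∀ n : ℕ, N < n →
      Nat.nth Nat.Prime (n + ⌊(n : ℝ) ^ α⌋₊) <
        ∏ i ∈ Finset.range (n + 1), Nat.nth Nat.Prime i := by
  obtain ⟨N, hN⟩ := eventually_atTop.mp (stmt_19_general α)
  exact ⟨N + 1, N.succ_pos, fun n hn ↦ hN n (by omega)⟩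
end
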